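/- Suppose L/k is a biquadratic extension of number fields and k₁, k₂, k₃ are the three quadratic extensions of k contained in L. Then 𝔠_L = 𝔠_k^{-2} · 𝔠_{k₁} · 𝔠_{k₂} · 𝔠_{k₃}. -/

import Mathlib

/-!
The identity is a comparison of residues at `s = 1` of Dedekind zeta functions. By the analytic
class number formula the residue of `ζ_F` is `𝔠_F / √|d_F|`, so it suffices to prove

* `ζ_L(s) ζ_k(s)² = ζ_{k₁}(s) ζ_{k₂}(s) ζ_{k₃}(s)` for real `s > 1` near `1`
  (`dedekindZeta_mul_sq_eq`), and
* `|d_L| |d_k|² = |d_{k₁}| |d_{k₂}| |d_{k₃}|` (`natAbs_discr_eq`).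

Both would follow from the decomposition of the permutation characters of the Klein four-group and
the Artin formalism; here they are obtained without `L`-functions of characters.

For the zeta functions, each `ζ_K` is written as an Euler product over the primes of `k`
(`hasProd_one_sub_pow`), and the factors at a prime `p` are compared (`local_identity`). The
ramification index `e` and the product `e f` are orders of the inertia and decomposition groups;
any subgroup `X` of the Klein four-group with its subgroups `Hᵢ` of order two satisfies
`|X| = 1 + ∑ (|X ∩ Hᵢ| - 1)`, and `f ≤ 2` because decomposition modulo inertia is cyclic. This
leaves finitely many possibilities for the splitting types.

For the discriminants, the differents satisfy `𝔡(L/k) = ∏ 𝔡(L/kᵢ)` (`differentIdeal_eq_prod`). This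
is checked locally at each prime `P` of `L`: there is `x` such that `𝓞_k[x]` agrees with `𝓞_L` at
`P` (`exists_conductor_not_le`), and there the different of `L/F` is generated by `f'(x)`, with `f`
the minimal polynomial of `x` over `F`. That derivative is `∏ (x - σ x)` over the nontrivial `σ`
fixing `F`, so the one for `k` is the product of those for the `kᵢ`. Taking norms gives the
relation between discriminants.
-/

open NumberField NumberField.InfinitePlace Module

/-- The constant `𝔠_F = 2^{r₁(F)} (2π)^{r₂(F)} h_F R_F e_F⁻¹` attached to a number field `F`,
where `r₁, r₂` are the numbers of real and complex places, `h_F` the class number, `R_F` the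
regulator and `e_F` the number of roots of unity of `F`. -/
noncomputable def frakC (F : Type*) [Field F] [NumberField F] : ℝ :=
  2 ^ nrRealPlaces F * (2 * Real.pi) ^ nrComplexPlaces F *
    (NumberField.classNumber F) * (NumberField.Units.regulator F) /
      (NumberField.Units.torsionOrder F : ℕ)

/-! ### Differents and discriminants -/

/-- Locally at a maximal ideal `P` with finite residue field, a finite extension `B` of `A` is
generated by one element: `P` does not contain the conductor of some `A[x]`.

Write the extension of `P ∩ A` to `B` as `P ^ e * J` with `J` prime to `P`. The element `x` is
chosen in `J`, generating the unit group of `B ⧸ P`, and with `x ^ (q - 1) - 1` a uniformizer at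
`P`, where `q = #(B ⧸ P)`. Then `A[x]` surjects onto `B ⧸ P` and `P` is the extension of its
contraction to `A[x]`, so Nakayama's lemma applies to `B / A[x]`. -/
lemma exists_conductor_not_le (A : Type*) {B : Type*} [CommRing A] [CommRing B] [IsDedekindDomain B]
    [Algebra A B] [Module.Finite A B] (P : Ideal B) [P.IsMaximal] [Finite (B ⧸ P)]
    (hp : (P.under A).map (algebraMap A B) ≠ ⊥) :
    ∃ x : B, ¬ conductor A x ≤ P := by
  have hPbot : P ≠ ⊥ := by
    rintro rfl
    exact hp (le_bot_iff.1 (Ideal.map_comap_le))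
  have hPpr : Prime P := Ideal.prime_of_isPrime hPbot inferInstance
  set I := (P.under A).map (algebraMap A B) with hI
  have hIP : I ≤ P := Ideal.map_comap_le
  obtain ⟨e, J, hJ, hIJ⟩ : ∃ e J, ¬ P ∣ J ∧ I = P ^ e * J := by
    have hf : FiniteMultiplicity P I := FiniteMultiplicity.of_not_isUnit hPpr.not_isUnit hp
    obtain ⟨J, h1, h2⟩ := hf.exists_eq_pow_mul_and_not_dvd
    exact ⟨_, J, h2, h1⟩
  have hcop : IsCoprime (P ^ 2) J := by
    apply IsCoprime.pow_left
    rw [Ideal.isCoprime_iff_sup_eq]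
    exact ((inferInstance : P.IsMaximal).1.2 _
      (left_lt_sup.2 (fun h => hJ (Ideal.dvd_iff_le.2 h))))
  let := Ideal.Quotient.field P
  let := Fintype.ofFinite (B ⧸ P)
  classical
  set q := Fintype.card (B ⧸ P) with hq
  have hq1 : 1 < q := Fintype.one_lt_card
  obtain ⟨ζ, hζ⟩ := IsCyclic.exists_generator (α := (B ⧸ P)ˣ)
  have hζq : (ζ : B ⧸ P) ^ (q - 1) = 1 := FiniteField.pow_card_sub_one_eq_one _ ζ.ne_zero
  -- A lift of the generator at which `X ^ (q - 1) - 1` is a uniformizer.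
  obtain ⟨x1, hx1, hx1'⟩ : ∃ x1 : B, Ideal.Quotient.mk P x1 = ζ ∧ x1 ^ (q - 1) - 1 ∉ P ^ 2 := by
    obtain ⟨x0, hx0⟩ := Ideal.Quotient.mk_surjective (ζ : B ⧸ P)
    by_cases h0 : x0 ^ (q - 1) - 1 ∈ P ^ 2
    · obtain ⟨π, hπ, hπ2⟩ := SetLike.exists_of_lt (Ideal.pow_succ_lt_pow hPbot 1)
      rw [pow_one] at hπ
      have hπ0 : Ideal.Quotient.mk P π = 0 := Ideal.Quotient.eq_zero_iff_mem.2 hπ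
      refine ⟨x0 + π, by rw [map_add, hx0, hπ0, add_zero], fun h1 => hπ2 ?_⟩
      have hππ : π * π ∈ P ^ 2 := by rw [pow_two]; exact Ideal.mul_mem_mul hπ hπ
      -- Modulo `P ^ 2` the value at `x0 + π`, times `x0 + π`, is `g (x0) + g' (x0) * π`
      -- where `g = X ^ q - X` has `g' = -1` modulo `P`.
      obtain ⟨c, hc⟩ := (Polynomial.X ^ q - Polynomial.X : Polynomial B).binomExpansion x0 π
      simp only [Polynomial.eval_sub, Polynomial.eval_pow, Polynomial.eval_X,
        Polynomial.derivative_sub, Polynomial.derivative_X_pow, Polynomial.derivative_X,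
        Polynomial.eval_mul, Polynomial.eval_one, Polynomial.eval_natCast,
        Polynomial.C_eq_natCast] at hc
      have hqP : (q : B) ∈ P := by
        rw [← Ideal.Quotient.eq_zero_iff_mem, map_natCast, hq]
        exact Nat.cast_card_eq_zero _
      have e1 : (x0 + π) ^ q = (x0 + π) ^ (q - 1) * (x0 + π) := by
        rw [← pow_succ, Nat.sub_add_cancel hq1.le]
      have e2 : x0 ^ q = x0 ^ (q - 1) * x0 := by
        rw [← pow_succ, Nat.sub_add_cancel hq1.le]
      have hqπ : (q : B) * π ∈ P ^ 2 := by rw [pow_two]; exact Ideal.mul_mem_mul hqP hπ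
      have : π = x0 * (x0 ^ (q - 1) - 1) + x0 ^ (q - 1) * (q * π) + c * (π * π)
          - (x0 + π) * ((x0 + π) ^ (q - 1) - 1) := by
        rw [e1, e2] at hc
        linear_combination hc
      rw [show 1 + 1 = 2 from rfl, this]
      exact sub_mem (add_mem (add_mem (Ideal.mul_mem_left _ _ h0) (Ideal.mul_mem_left _ _ hqπ))
        (Ideal.mul_mem_left _ _ hππ)) (Ideal.mul_mem_left _ _ h1)
    · exact ⟨x0, hx0, h0⟩
  obtain ⟨x, hxP, hxJ⟩ : ∃ x : B, x - x1 ∈ P ^ 2 ∧ x ∈ J := by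
    obtain ⟨a, ha, b, hb, hab⟩ := Ideal.isCoprime_iff_exists.1 hcop
    refine ⟨b * x1, ?_, Ideal.mul_mem_right _ _ hb⟩
    have : b * x1 - x1 = -x1 * a := by linear_combination x1 * hab
    rw [this]
    exact Ideal.mul_mem_left _ _ ha
  have hxζ : Ideal.Quotient.mk P x = ζ := by
    rw [← hx1, Ideal.Quotient.eq]
    exact Ideal.pow_le_self two_ne_zero hxP
  have hhP : x ^ (q - 1) - 1 ∈ P := by
    rw [← Ideal.Quotient.eq_zero_iff_mem, map_sub, map_pow, hxζ, hζq, map_one, sub_self]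
  have hhP2 : x ^ (q - 1) - 1 ∉ P ^ 2 := by
    intro h
    apply hx1'
    have h2 : x ^ (q - 1) - x1 ^ (q - 1) ∈ P ^ 2 :=
      Ideal.mem_of_dvd _ (sub_dvd_pow_sub_pow x x1 (q - 1)) hxP
    have := sub_mem h h2
    ring_nf at this ⊢
    exact this
  refine ⟨x, fun hc => ?_⟩
  let S := Algebra.adjoin A {x}
  have hxS : x ∈ S := Algebra.self_mem_adjoin_singleton A x
  let m : Ideal S := P.under S
  -- `m` generates `P`: it contains `P ^ e * J` and `x ^ (q - 1) - 1`, which is prime to `J`.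
  have hmB : P ≤ m.map (algebraMap S B) := by
    have h1 : I ⊔ Ideal.span {x ^ (q - 1) - 1} ≤ m.map (algebraMap S B) := by
      refine sup_le ?_ ?_
      · rw [hI, Ideal.map_le_iff_le_comap]
        intro a ha
        exact Ideal.mem_map_of_mem (algebraMap S B) (x := algebraMap A S a) ha
      · rw [Ideal.span_singleton_le_iff_mem]
        exact Ideal.mem_map_of_mem (algebraMap S B) (I := m)
          (x := ⟨x ^ (q - 1) - 1, sub_mem (pow_mem hxS _) (one_mem _)⟩) hhP
    refine le_trans ?_ h1
    have hJh : J ⊔ Ideal.span {x ^ (q - 1) - 1} = ⊤ := by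
      rw [Ideal.eq_top_iff_one]
      have h3 : x ^ (q - 1) ∈ J := Ideal.pow_mem_of_mem _ hxJ _ (by omega)
      have := sub_mem (Ideal.mem_sup_left h3)
        (Ideal.mem_sup_right (Ideal.mem_span_singleton_self (x ^ (q - 1) - 1)))
      simpa using this
    rw [hIJ, Ideal.mul_sup_eq_of_coprime_right hJh]
    obtain ⟨i, hi, hi'⟩ := (dvd_prime_pow hPpr e).1
      (Ideal.dvd_iff_le.2 (le_sup_left : P ^ e ≤ P ^ e ⊔ Ideal.span {x ^ (q - 1) - 1}))
    rw [associated_iff_eq] at hi'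
    rw [hi']
    have : i < 2 := by
      by_contra hcon
      apply hhP2
      apply Ideal.pow_le_pow_right (not_lt.1 hcon)
      rw [← hi']
      exact Ideal.mem_sup_right (Ideal.mem_span_singleton_self _)
    calc P = P ^ 1 := (pow_one P).symm
      _ ≤ P ^ i := Ideal.pow_le_pow_right (by omega)
  have hgen : ∀ b : B, ∃ s : S, b - s ∈ P := by
    intro b
    by_cases hb : Ideal.Quotient.mk P b = 0
    · exact ⟨0, by simpa using Ideal.Quotient.eq_zero_iff_mem.1 hb⟩
    · obtain ⟨n, hn⟩ := (mem_powers_iff_mem_zpowers.2 (hζ (Units.mk0 _ hb)))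
      refine ⟨⟨x ^ n, pow_mem hxS n⟩, ?_⟩
      rw [← Ideal.Quotient.eq, map_pow, hxζ, ← Units.val_pow_eq_pow_val]
      exact (congrArg Units.val hn).symm
  let N : Submodule S B := Subalgebra.toSubmodule (⊥ : Subalgebra S B)
  have : Module.Finite S B := Module.Finite.of_restrictScalars_finite A S B
  -- Nakayama's lemma for `B / S`
  obtain ⟨r, hr, hr'⟩ := Submodule.exists_sub_one_mem_and_smul_eq_zero_of_fg_of_le_smul m
    (⊤ : Submodule S (B ⧸ N)) Module.Finite.fg_top (by
      rintro y -
      obtain ⟨b, rfl⟩ := N.mkQ_surjective y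
      obtain ⟨s, hs⟩ := hgen b
      have h2 : N.mkQ b = N.mkQ (b - s) := by
        rw [eq_comm, ← sub_eq_zero, ← map_sub]
        simp only [Submodule.mkQ_apply, Submodule.Quotient.mk_eq_zero]
        refine Algebra.mem_bot.2 ⟨-s, ?_⟩
        change -(s : B) = _
        ring
      rw [h2]
      have h3 : b - s ∈ m • (⊤ : Submodule S B) := by
        rw [Ideal.smul_top_eq_map]
        exact hmB hs
      have := Submodule.mem_map_of_mem (f := N.mkQ) h3
      rw [Submodule.map_smul''] at this
      exact Submodule.smul_mono le_rfl le_top this)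
  have hrc : (r : B) ∈ conductor A x := by
    intro b
    have := hr' (N.mkQ b) trivial
    rw [← map_smul, Submodule.mkQ_apply, Submodule.Quotient.mk_eq_zero] at this
    obtain ⟨s, hs⟩ := Algebra.mem_bot.1 this
    have h4 : (r : B) * b = s := hs.symm
    rw [h4]
    exact s.2
  have h5 : (r : B) ∈ P := hc hrc
  have h6 : (r : B) - 1 ∈ P := hr
  apply (inferInstance : P.IsMaximal).ne_top
  rw [Ideal.eq_top_iff_one]
  simpa using sub_mem h5 h6

/-- Containment of ideals is local: it may be tested at each maximal ideal `P`, up to multiplication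
by an ideal `c` which becomes trivial at `P`. -/
lemma ideal_le_of_forall_maximal {B : Type*} [CommRing B] {D E : Ideal B}
    (h : ∀ P : Ideal B, P.IsMaximal → ∃ c : Ideal B, ¬ c ≤ P ∧ c * D ≤ E) : D ≤ E := by
  intro d hd
  by_contra hdE
  let I : Ideal B := Submodule.comap (LinearMap.toSpanSingleton B B d) E
  have hI : I ≠ ⊤ := fun h1 => hdE <| by
    have : (1 : B) ∈ I := h1 ▸ trivial
    simpa [I] using this
  obtain ⟨P, hP, hIP⟩ := Ideal.exists_le_maximal I hI
  obtain ⟨c, hc, hcD⟩ := h P hP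
  refine hc fun r hr => hIP ?_
  simpa [I] using hcD (Ideal.mul_mem_mul hr hd)

lemma adjoin_eq_top_of_conductor_ne_bot {K L : Type*} [Field K] [Field L] [NumberField K]
    [NumberField L] [Algebra K L] {x : 𝓞 L} (hx : conductor (𝓞 K) x ≠ ⊥) :
    Algebra.adjoin K {(x : L)} = ⊤ := by
  obtain ⟨c, hc, hc0⟩ := Submodule.exists_mem_ne_zero_of_ne_bot hx
  let T := IntermediateField.adjoin K {(x : L)}
  have hT : ∀ b ∈ Algebra.adjoin (𝓞 K) {x}, (b : L) ∈ T := by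
    intro b hb
    induction hb using Algebra.adjoin_induction with
    | mem y hy =>
      rw [Set.mem_singleton_iff.1 hy]
      exact IntermediateField.mem_adjoin_simple_self K _
    | algebraMap r => exact T.algebraMap_mem (r : K)
    | add y z _ _ h1 h2 => exact T.add_mem h1 h2
    | mul y z _ _ h1 h2 => exact T.mul_mem h1 h2
  have hcT : (c : L) ∈ T := by simpa using hT _ (hc 1)
  have hc0' : (c : L) ≠ 0 := by simpa using hc0
  have hB : ∀ b : 𝓞 L, (b : L) ∈ T := by
    intro b
    have h1 : ((c * b : 𝓞 L) : L) ∈ T := hT _ (hc b)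
    have h2 : (b : L) = (c : L)⁻¹ * ((c * b : 𝓞 L) : L) := by
      change (b : L) = (c : L)⁻¹ * ((c : L) * (b : L))
      rw [inv_mul_cancel_left₀ hc0']
    rw [h2]
    exact T.mul_mem (T.inv_mem hcT) h1
  have hTtop : T = ⊤ := by
    rw [eq_top_iff]
    rintro y -
    obtain ⟨a, b, -, rfl⟩ := IsFractionRing.div_surjective (A := 𝓞 L) y
    exact T.div_mem (hB a) (hB b)
  rw [← IntermediateField.adjoin_simple_toSubalgebra_of_isAlgebraic
    (Algebra.IsAlgebraic.isAlgebraic _)]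
  exact congrArg IntermediateField.toSubalgebra hTtop

open Polynomial in
/-- If `x` generates `L / K` and `S` consists of `[L : K] - 1` further roots of the minimal
polynomial `f` of `x`, then `f = (X - x) ∏ (X - y)` and `f'(x) = ∏ (x - y)`, with `y` running
over `S`. -/
lemma aeval_derivative_minpoly_eq_prod {K L : Type*} [Field K] [Field L] [Algebra K L]
    [FiniteDimensional K L] (x : L) (hx : Algebra.adjoin K {x} = ⊤) (S : Finset L) (hxS : x ∉ S)
    (hS : ∀ y ∈ S, aeval y (minpoly K x) = 0) (hcard : S.card + 1 = finrank K L) :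
    aeval x (derivative (minpoly K x)) = ∏ y ∈ S, (x - y) := by
  classical
  have hint : IsIntegral K x := Algebra.IsIntegral.isIntegral x
  have hdeg : (minpoly K x).natDegree = finrank K L := by
    have hT : IntermediateField.adjoin K {x} = ⊤ := by
      apply IntermediateField.toSubalgebra_injective
      rw [IntermediateField.adjoin_simple_toSubalgebra_of_isAlgebraic hint.isAlgebraic, hx]
      rfl
    rw [← IntermediateField.adjoin.finrank hint, hT, IntermediateField.finrank_top']
  have hmin : (minpoly K x).map (algebraMap K L) = (X - C x) * ∏ y ∈ S, (X - C y) := by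
    rw [← Finset.prod_insert (f := fun y => (X - C y : L[X])) hxS]
    have m1 : (∏ y ∈ insert x S, (X - C y : L[X])).Monic :=
      monic_prod_of_monic _ _ fun y _ => monic_X_sub_C y
    have m2 : ((minpoly K x).map (algebraMap K L)).Monic := (minpoly.monic hint).map _
    have m3 : ∏ y ∈ insert x S, (X - C y : L[X]) ∣ (minpoly K x).map (algebraMap K L) := by
      refine Finset.prod_dvd_of_coprime ?_ ?_
      · intro a _ b _ hab
        exact isCoprime_X_sub_C_of_isUnit_sub (sub_ne_zero.2 hab).isUnit
      · intro y hy
        rw [dvd_iff_isRoot, IsRoot.def, eval_map_algebraMap]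
        rcases Finset.mem_insert.1 hy with rfl | hy
        · exact minpoly.aeval _ _
        · exact hS y hy
    have m4 : ((minpoly K x).map (algebraMap K L)).natDegree ≤
        (∏ y ∈ insert x S, (X - C y : L[X])).natDegree := by
      rw [natDegree_map, hdeg, natDegree_prod_of_monic _ _ fun y _ => monic_X_sub_C y]
      simp [Finset.card_insert_of_notMem hxS, hcard]
    exact eq_of_monic_of_dvd_of_natDegree_le m1 m2 m3 m4
  rw [← eval_map_algebraMap, ← derivative_map, hmin]
  simp [derivative_mul, eval_prod]

open Polynomial in
/-- The product of the conductor of `𝓞_K[x]` and the different is generated by the derivative of the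
minimal polynomial at `x`, here expressed by the conjugates of `x`. -/
lemma conductor_mul_different_eq {K L : Type*} [Field K] [Field L] [NumberField K]
    [NumberField L] [Algebra K L] {x : 𝓞 L} (hx : conductor (𝓞 K) x ≠ ⊥) (z : 𝓞 L)
    (S : Finset L) (hxS : (x : L) ∉ S)
    (hS : ∀ y ∈ S, aeval y (minpoly K (x : L)) = 0) (hcard : S.card + 1 = finrank K L)
    (hz : (z : L) = ∏ y ∈ S, ((x : L) - y)) :
    conductor (𝓞 K) x * differentIdeal (𝓞 K) (𝓞 L) = Ideal.span {z} := by
  have hx' := adjoin_eq_top_of_conductor_ne_bot hx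
  rw [conductor_mul_differentIdeal (𝓞 K) K L x hx']
  congr 2
  apply RingOfIntegers.coe_injective
  refine Eq.trans ?_ hz.symm
  rw [← aeval_derivative_minpoly_eq_prod (x : L) hx' S hxS hS hcard,
    minpoly.isIntegrallyClosed_eq_field_fractions K L
      (Algebra.IsIntegral.isIntegral (R := 𝓞 K) x),
    derivative_map, aeval_map_algebraMap, aeval_algebraMap_apply]

open Polynomial in
/-- Multiplicativity of differents in a biquadratic extension. The automorphism `σ i` is the
nontrivial one fixing `F i`, so that `x - σ i x` generates the different of `L / F i` at primes
where `x` generates the ring of integers, and `∏ i, (x - σ i x)` the different of `L / k`. -/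
theorem differentIdeal_eq_prod {k L : Type*} [Field k] [Field L] [NumberField k]
    [NumberField L] [Algebra k L] (hdeg : finrank k L = 4)
    (F : Fin 3 → IntermediateField k L) (hF : ∀ i, finrank (F i) L = 2)
    (σ : Fin 3 → (L ≃ₐ[k] L)) (hσ : Function.Injective σ) (hσ1 : ∀ i, σ i ≠ 1)
    (hσF : ∀ i, σ i ∈ (F i).fixingSubgroup) :
    differentIdeal (𝓞 k) (𝓞 L) = ∏ i, differentIdeal (𝓞 (F i)) (𝓞 L) := by
  classical
  have key : ∀ P : Ideal (𝓞 L), P.IsMaximal → ∃ c c' : Ideal (𝓞 L), ¬ c ≤ P ∧ ¬ c' ≤ P ∧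
      c * differentIdeal (𝓞 k) (𝓞 L) = c' * ∏ i, differentIdeal (𝓞 (F i)) (𝓞 L) := by
    intro P hP
    have hPbot : P ≠ ⊥ := Ring.ne_bot_of_isMaximal_of_not_isField hP (RingOfIntegers.not_isField L)
    have : Finite (𝓞 L ⧸ P) := Ideal.finiteQuotientOfFreeOfNeBot P hPbot
    obtain ⟨x, hx⟩ := exists_conductor_not_le (𝓞 k) P (by
      rw [Ne, Ideal.map_eq_bot_iff_of_injective (FaithfulSMul.algebraMap_injective _ _)]
      exact mt Ideal.eq_bot_of_comap_eq_bot hPbot)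
    have hxi : ∀ i, ¬ conductor (𝓞 (F i)) x ≤ P := by
      intro i h
      refine hx (le_trans ?_ h)
      intro c hc b
      have h1 := hc b
      have h2 : Algebra.adjoin (𝓞 k) {x} ≤ (Algebra.adjoin (𝓞 (F i)) {x}).restrictScalars (𝓞 k) :=
        Algebra.adjoin_le (Algebra.subset_adjoin)
      exact h2 h1
    have hne : conductor (𝓞 k) x ≠ ⊥ := fun h => hx (h ▸ bot_le)
    have hnei : ∀ i, conductor (𝓞 (F i)) x ≠ ⊥ := fun i h => hxi i (h ▸ bot_le)
    have hinj : ∀ τ τ' : L ≃ₐ[k] L, τ x = τ' x → τ = τ' := by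
      intro τ τ' h
      have h1 : (τ : L →ₐ[k] L) = τ' := AlgHom.ext_of_adjoin_eq_top
        (adjoin_eq_top_of_conductor_ne_bot hne) (by simpa [Set.EqOn] using h)
      ext y
      exact DFunLike.congr_fun h1 y
    have hxσ : ∀ i, (x : L) ≠ σ i x := fun i h => hσ1 i (hinj _ _ (by simpa using h.symm))
    let z : Fin 3 → 𝓞 L := fun i => x - RingOfIntegers.mapAlgEquiv (σ i) x
    have hz : ∀ i, (z i : L) = x - σ i x := fun i => rfl
    have e0 := conductor_mul_different_eq hne (∏ i, z i) (Finset.univ.image fun i => σ i x)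
      (by simpa using fun i h => hxσ i h.symm)
      (by
        intro y hy
        obtain ⟨i, -, rfl⟩ := Finset.mem_image.1 hy
        rw [aeval_algHom_apply, minpoly.aeval, map_zero])
      (by
        rw [Finset.card_image_of_injective _ fun i j h => hσ (hinj _ _ h), hdeg]
        rfl)
      (by
        rw [Finset.prod_image fun i _ j _ h => hσ (hinj _ _ h)]
        change algebraMap (𝓞 L) L (∏ i, z i) = _
        rw [map_prod]
        rfl)
    have ei : ∀ i, conductor (𝓞 (F i)) x * differentIdeal (𝓞 (F i)) (𝓞 L) = Ideal.span {z i} := by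
      intro i
      refine conductor_mul_different_eq (hnei i) (z i) {σ i x} (by simpa using hxσ i) ?_
        (by rw [hF i]; rfl) (by simp [hz])
      intro y hy
      rw [Finset.mem_singleton.1 hy]
      have := aeval_algHom_apply ((IntermediateField.fixingSubgroupEquiv (F i)) ⟨σ i, hσF i⟩)
        (x : L) (minpoly (F i) (x : L))
      rw [minpoly.aeval, map_zero] at this
      exact this
    refine ⟨_, ∏ i, conductor (𝓞 (F i)) x, hx, ?_, ?_⟩
    · rw [Ideal.IsPrime.prod_le hP.isPrime]
      simpa using hxi
    · rw [e0, ← Finset.prod_mul_distrib, Finset.prod_congr rfl fun i _ => ei i,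
        Ideal.prod_span_singleton]
  apply le_antisymm <;> refine ideal_le_of_forall_maximal fun P hP => ?_
  · obtain ⟨c, c', hc, hc', h⟩ := key P hP
    exact ⟨c, hc, h ▸ Ideal.mul_le_right⟩
  · obtain ⟨c, c', hc, hc', h⟩ := key P hP
    exact ⟨c', hc', h ▸ Ideal.mul_le_right⟩

/-- The relation between discriminants. With `D(F)` the norm of the different of `L / F`, the tower
formula gives `|d_L| = D(k) |d_k| ^ 4` and `|d_L| = D(F i) |d_{F i}| ^ 2`; multiplicativity of
differents is `D(k) = ∏ D(F i)`. -/
theorem natAbs_discr_eq {k L : Type*} [Field k] [Field L] [NumberField k]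
    [NumberField L] [Algebra k L] (hdeg : finrank k L = 4)
    (F : Fin 3 → IntermediateField k L) (hF : ∀ i, finrank (F i) L = 2)
    (σ : Fin 3 → (L ≃ₐ[k] L)) (hσ : Function.Injective σ) (hσ1 : ∀ i, σ i ≠ 1)
    (hσF : ∀ i, σ i ∈ (F i).fixingSubgroup) :
    (discr L).natAbs * (discr k).natAbs ^ 2 = ∏ i, (discr (F i)).natAbs := by
  have e := congrArg Ideal.absNorm (differentIdeal_eq_prod hdeg F hF σ hσ hσ1 hσF)
  rw [map_prod] at e
  have e0 := natAbs_discr_eq_absNorm_differentIdeal_mul_natAbs_discr_pow k (𝓞 k) L (𝓞 L)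
  have ei := fun i => natAbs_discr_eq_absNorm_differentIdeal_mul_natAbs_discr_pow (F i) (𝓞 (F i))
    L (𝓞 L)
  simp only [hF] at ei
  rw [hdeg] at e0
  have hL : 0 < (discr L).natAbs := Int.natAbs_pos.2 (discr_ne_zero L)
  have h3 : (discr L).natAbs ^ 3 = (∏ i, (differentIdeal (𝓞 (F i)) (𝓞 L)).absNorm) *
      (∏ i, (discr (F i)).natAbs) ^ 2 := by
    rw [← Finset.prod_pow, ← Finset.prod_mul_distrib, ← Finset.prod_congr rfl fun i _ => ei i]
    simp
  rw [← e] at h3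
  have h4 : ((discr L).natAbs * (discr k).natAbs ^ 2) ^ 2 = (∏ i, (discr (F i)).natAbs) ^ 2 := by
    apply Nat.eq_of_mul_eq_mul_left hL
    calc _ = (discr L).natAbs ^ 3 * (discr k).natAbs ^ 4 := by ring
      _ = _ := by rw [h3]; nth_rw 1 [e0]; ring
  exact Nat.pow_left_injective two_ne_zero h4

/-! ### Euler products -/

open IsDedekindDomain in
/-- The Euler product of a nonnegative summable completely multiplicative weight on ideals. For a
finite set `S` of primes, `∏_{P ∈ S} (1 - w P) * ∑ w I` is the sum of `w` over the ideals prime to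
`S`; as `S` grows this tends to `w 1 = 1` by dominated convergence. -/
theorem hasProd_one_sub_of_summable {R : Type*} [CommRing R] [IsDedekindDomain R]
    (w : Ideal R →*₀ ℝ) (hw0 : ∀ I, 0 ≤ w I) (hw : Summable w) :
    HasProd (fun P : HeightOneSpectrum R => 1 - w P.asIdeal) (∑' I, w I)⁻¹ := by
  classical
  let A : Finset (HeightOneSpectrum R) → Set (Ideal R) := fun S => {I | ∀ P ∈ S, ¬ P.asIdeal ∣ I}
  have hsum : ∀ S, Summable ((A S).indicator w) := fun S => hw.indicator _
  have hstep : ∀ S P, P ∉ S →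
      ∑' I, (A (insert P S)).indicator w I = (1 - w P.asIdeal) * ∑' I, (A S).indicator w I := by
    intro S P hP
    have hsplit : ∀ I, (A S).indicator w I = (A (insert P S)).indicator w I +
        (A S ∩ {I | P.asIdeal ∣ I}).indicator w I := by
      intro I
      by_cases h1 : I ∈ A S <;> by_cases h2 : P.asIdeal ∣ I <;>
        simp_all [A]
    have hmul : ∑' I, (A S ∩ {I | P.asIdeal ∣ I}).indicator w I =
        w P.asIdeal * ∑' I, (A S).indicator w I := by
      have hinj : Function.Injective (fun I : Ideal R => P.asIdeal * I) :=
        mul_right_injective₀ P.ne_bot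
      rw [← hinj.tsum_eq, ← tsum_mul_left]
      · refine tsum_congr fun I => ?_
        have : P.asIdeal * I ∈ A S ∩ {I | P.asIdeal ∣ I} ↔ I ∈ A S := by
          simp only [A, Set.mem_inter_iff, Set.mem_ofPred_eq, dvd_mul_right, and_true]
          refine forall₂_congr fun Q hQ => not_congr ⟨fun h => ?_, fun h => h.mul_left _⟩
          refine (Q.prime.dvd_or_dvd h).resolve_left fun h' => hP ?_
          have h2 : P.asIdeal = Q.asIdeal :=
            (P.isMaximal.eq_of_le Q.isPrime.ne_top (Ideal.le_of_dvd h'))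
          rwa [HeightOneSpectrum.ext h2]
        by_cases h : I ∈ A S
        · rw [Set.indicator_of_mem h, Set.indicator_of_mem (this.2 h), map_mul]
        · rw [Set.indicator_of_notMem h, Set.indicator_of_notMem (mt this.1 h), mul_zero]
      · intro I hI
        obtain ⟨J, rfl⟩ := (Set.mem_of_indicator_ne_zero hI).2
        exact ⟨J, rfl⟩
    have hadd : ∑' I, (A S).indicator w I = ∑' I, (A (insert P S)).indicator w I +
        ∑' I, (A S ∩ {I | P.asIdeal ∣ I}).indicator w I := by
      rw [← (hsum _).tsum_add (hw.indicator _)]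
      exact tsum_congr hsplit
    linarith
  have hprod : ∀ S, ∑' I, (A S).indicator w I = (∏ P ∈ S, (1 - w P.asIdeal)) * ∑' I, w I := by
    intro S
    induction S using Finset.induction_on with
    | empty => simp [A]
    | insert P S hP ih => rw [hstep S P hP, ih, Finset.prod_insert hP, mul_assoc]
  have hpos : 0 < ∑' I, w I := hw.tsum_pos hw0 1 (by rw [map_one]; exact one_pos)
  have hlim : Filter.Tendsto (fun S => ∑' I, (A S).indicator w I) Filter.atTop
      (nhds (∑' I, Set.indicator {1} w I)) := by
    refine tendsto_tsum_of_dominated_convergence hw (fun I => ?_) ?_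
    · refine tendsto_const_nhds.congr' ?_
      -- The zero ideal is divisible by every prime, but it may lie in `A ∅`; its weight is `0`.
      by_cases hI0 : I = 0
      · simp only [hI0, Set.indicator_apply, map_zero, ite_self]
        rfl
      by_cases hI : I = 1
      · refine Filter.Eventually.of_forall fun S => ?_
        have : I ∈ A S := fun P _ h => P.prime.not_isUnit (isUnit_of_dvd_one (hI ▸ h))
        exact (Set.indicator_of_mem (s := {1}) hI w).trans (Set.indicator_of_mem this w).symm
      · obtain ⟨M, hM, hIM⟩ := Ideal.exists_le_maximal I (by simpa using hI)
        have hMb : M ≠ ⊥ := fun h => hI0 (by simpa [h] using hIM)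
        filter_upwards [Filter.eventually_ge_atTop {⟨M, hM.isPrime, hMb⟩}] with S hS
        have : I ∉ A S := fun h => h _ (Finset.singleton_subset_iff.1 hS) (Ideal.dvd_iff_le.2 hIM)
        exact (Set.indicator_of_notMem (s := {1}) hI w).trans (Set.indicator_of_notMem this w).symm
    · refine Filter.Eventually.of_forall fun S I => ?_
      rw [Real.norm_eq_abs, abs_of_nonneg (Set.indicator_nonneg (fun _ _ => hw0 _) _)]
      exact Set.indicator_le_self' (fun _ _ => hw0 _) _
  have h1 : ∑' I, Set.indicator {1} w I = 1 := by
    rw [tsum_eq_single 1 fun I hI => Set.indicator_of_notMem (by exact hI) _,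
      Set.indicator_of_mem (Set.mem_singleton _), map_one]
  rw [h1] at hlim
  have := hlim.mul_const (∑' I, w I)⁻¹
  simp only [hprod, one_mul, mul_inv_cancel_right₀ hpos.ne'] at this
  exact this

/-- The weight `I ↦ N(I)⁻ˢ` on the ideals of a number field, for `s ≠ 0`; it vanishes at `0`. -/
noncomputable def normPow (K : Type*) [Field K] [NumberField K] (s : ℝ) (hs : s ≠ 0) :
    Ideal (𝓞 K) →*₀ ℝ where
  toFun I := (Ideal.absNorm I : ℝ) ^ (-s)
  map_zero' := by simp [Real.zero_rpow (neg_ne_zero.2 hs)]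
  map_one' := by simp
  map_mul' I J := by
    rw [map_mul, Nat.cast_mul, Real.mul_rpow (Nat.cast_nonneg _) (Nat.cast_nonneg _)]

lemma normPow_apply (K : Type*) [Field K] [NumberField K] (s : ℝ) (hs : s ≠ 0)
    (I : Ideal (𝓞 K)) : normPow K s hs I = (Ideal.absNorm I : ℝ) ^ (-s) := rfl

/-- The Dedekind zeta function as a sum over ideals. Nonvanishing implies summability because
`dedekindZeta` takes the junk value `0` where its Dirichlet series is not absolutely summable. -/
theorem dedekindZeta_eq_tsum_normPow (K : Type*) [Field K] [NumberField K] (s : ℝ) (hs : s ≠ 0)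
    (h : dedekindZeta K s ≠ 0) :
    Summable (normPow K s hs) ∧ dedekindZeta K s = ((∑' I, normPow K s hs I : ℝ) : ℂ) := by
  classical
  let a : ℕ → ℕ := fun n => Nat.card {I : Ideal (𝓞 K) // Ideal.absNorm I = n}
  have hterm : ∀ n, LSeries.term (fun n => (a n : ℂ)) s n = ((a n * (n : ℝ) ^ (-s) : ℝ) : ℂ) := by
    intro n
    rw [LSeries.term_def]
    split_ifs with hn
    · simp [hn, Real.zero_rpow (neg_ne_zero.2 hs)]
    · rw [Real.rpow_neg (Nat.cast_nonneg _), div_eq_mul_inv]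
      push_cast
      rw [Complex.ofReal_cpow (Nat.cast_nonneg _)]
      simp
  have hz : dedekindZeta K s = ((∑' n, a n * (n : ℝ) ^ (-s) : ℝ) : ℂ) := by
    rw [Complex.ofReal_tsum]
    exact tsum_congr hterm
  have hsa : Summable fun n => a n * (n : ℝ) ^ (-s) := by
    by_contra hns
    exact h (by rw [hz, tsum_eq_zero_of_not_summable hns, Complex.ofReal_zero])
  have hfin : ∀ n, Finite {I : Ideal (𝓞 K) // Ideal.absNorm I = n} := fun n =>
    (Ideal.finite_setOfPred_absNorm_eq n).to_subtype
  let e := Equiv.sigmaFiberEquiv (fun I : Ideal (𝓞 K) => Ideal.absNorm I)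
  have hfib : ∀ n, HasSum (fun I : {I : Ideal (𝓞 K) // Ideal.absNorm I = n} =>
      normPow K s hs (e ⟨n, I⟩)) (a n * (n : ℝ) ^ (-s)) := by
    intro n
    have := Fintype.ofFinite {I : Ideal (𝓞 K) // Ideal.absNorm I = n}
    have hconst : ∀ I : {I : Ideal (𝓞 K) // Ideal.absNorm I = n},
        normPow K s hs (e ⟨n, I⟩) = (n : ℝ) ^ (-s) := by
      rintro ⟨I, rfl⟩
      rfl
    simp_rw [hconst]
    convert hasSum_fintype (fun _ : {I : Ideal (𝓞 K) // Ideal.absNorm I = n} => (n : ℝ) ^ (-s))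
      using 1
    simp [a]
  have hsum : Summable (normPow K s hs ∘ e) := by
    refine (summable_sigma_of_nonneg (f := normPow K s hs ∘ e)
      fun _ => Real.rpow_nonneg (Nat.cast_nonneg _) _).2 ⟨fun n => (hfib n).summable, ?_⟩
    convert hsa using 2 with n
    exact (hfib n).tsum_eq
  refine ⟨e.summable_iff.1 hsum, ?_⟩
  rw [hz, ← e.tsum_eq (normPow K s hs)]
  exact congrArg _ (hsum.hasSum.sigma hfib).tsum_eq

open IsDedekindDomain in
/-- For `K / k` Galois, `ζ_K⁻¹` as an Euler product over the primes `p` of `k`: the `g` primes of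
`K` above `p` have norm `N(p) ^ f`, so together they contribute `(1 - N(p) ^ (-s f)) ^ g`. -/
theorem hasProd_one_sub_pow (k : Type*) {K : Type*} [Field k] [Field K] [NumberField k]
    [NumberField K] [Algebra k K] [IsGalois k K] (s : ℝ) (hs : s ≠ 0)
    (h : dedekindZeta K s ≠ 0) :
    HasProd (fun p : HeightOneSpectrum (𝓞 k) =>
      (1 - normPow k s hs p.asIdeal ^ p.asIdeal.inertiaDegIn (𝓞 K)) ^
        (p.asIdeal.primesOver (𝓞 K)).ncard) (∑' I, normPow K s hs I)⁻¹ := by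
  classical
  have h0 := hasProd_one_sub_of_summable (normPow K s hs)
    (fun _ => Real.rpow_nonneg (Nat.cast_nonneg _) _) (dedekindZeta_eq_tsum_normPow K s hs h).1
  let e := Equiv.sigmaFiberEquiv (fun P : HeightOneSpectrum (𝓞 K) => P.under (𝓞 k))
  rw [← e.hasProd_iff] at h0
  refine h0.sigma fun p => ?_
  have hmem : ∀ P : HeightOneSpectrum (𝓞 K), P.under (𝓞 k) = p ↔
      P.asIdeal ∈ p.asIdeal.primesOver (𝓞 K) := fun P =>
    ⟨fun hP => ⟨P.isPrime, ⟨by rw [← hP]; rfl⟩⟩, fun hP => HeightOneSpectrum.ext hP.2.over.symm⟩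
  let φ : {P : HeightOneSpectrum (𝓞 K) // P.under (𝓞 k) = p} ≃ p.asIdeal.primesOver (𝓞 K) :=
    Set.BijOn.equiv HeightOneSpectrum.asIdeal
      ⟨fun P hP => (hmem P).1 hP, fun _ _ _ _ h => HeightOneSpectrum.ext h, fun Q hQ =>
        ⟨⟨Q, hQ.1, Ideal.ne_bot_of_mem_primesOver p.ne_bot hQ⟩, (hmem _).2 hQ, rfl⟩⟩
  have : Finite (p.asIdeal.primesOver (𝓞 K)) :=
    (Algebra.QuasiFinite.finite_primesOver p.asIdeal)
  have : Finite {P : HeightOneSpectrum (𝓞 K) // P.under (𝓞 k) = p} := Finite.of_equiv _ φ.symm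
  have := Fintype.ofFinite {P : HeightOneSpectrum (𝓞 K) // P.under (𝓞 k) = p}
  have hconst : ∀ P : {P : HeightOneSpectrum (𝓞 K) // P.under (𝓞 k) = p},
      1 - normPow K s hs (e ⟨p, P⟩).asIdeal =
        1 - normPow k s hs p.asIdeal ^ p.asIdeal.inertiaDegIn (𝓞 K) := by
    intro P
    change 1 - normPow K s hs P.1.asIdeal = _
    have hP := (hmem P.1).1 P.2
    have := hP.2
    rw [normPow_apply, normPow_apply, Ideal.absNorm_eq_pow_inertiaDeg'_of_liesOver P.1.asIdeal
      p.asIdeal p.isPrime p.ne_bot, Ideal.inertiaDeg'_eq_inertiaDeg,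
      Ideal.inertiaDegIn_eq_inertiaDeg p.asIdeal P.1.asIdeal (K ≃ₐ[k] K), Nat.cast_pow,
      Real.rpow_pow_comm (Nat.cast_nonneg _)]
  simp only [Function.comp_apply, hconst]
  convert hasProd_fintype (fun _ : {P : HeightOneSpectrum (𝓞 K) // P.under (𝓞 k) = p} =>
      1 - normPow k s hs p.asIdeal ^ p.asIdeal.inertiaDegIn (𝓞 K)) using 1
  rw [Finset.prod_const, Finset.card_univ, ← Nat.card_eq_fintype_card, Nat.card_congr φ]
  rfl

/-! ### Splitting of primes in a biquadratic extension -/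

open scoped Pointwise in
/-- The inertia and decomposition groups of `P` over `F` are the intersections of those over `k`
with `Gal(L / F)`. By multiplicativity of `e` and `f` in towers their orders determine `e` and `e f`
for `F / k`. -/
lemma ramificationIdxIn_mul_card_inf {k L : Type*} [Field k] [Field L] [NumberField k]
    [NumberField L] [Algebra k L] [IsGalois k L] (F : IntermediateField k L) [IsGalois k F]
    (p : Ideal (𝓞 k)) (hp : p ≠ ⊥) [p.IsMaximal] (P : Ideal (𝓞 L)) [P.IsPrime] [P.LiesOver p] :
    p.ramificationIdxIn (𝓞 F) *
        Nat.card ↥(P.inertia (L ≃ₐ[k] L) ⊓ F.fixingSubgroup : Subgroup (L ≃ₐ[k] L)) =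
      p.ramificationIdxIn (𝓞 L) ∧
    p.ramificationIdxIn (𝓞 F) * p.inertiaDegIn (𝓞 F) *
        Nat.card ↥(MulAction.stabilizer (L ≃ₐ[k] L) P ⊓ F.fixingSubgroup :
          Subgroup (L ≃ₐ[k] L)) =
      p.ramificationIdxIn (𝓞 L) * p.inertiaDegIn (𝓞 L) := by
  let q : Ideal (𝓞 F) := P.under (𝓞 F)
  have hq : q.LiesOver p := ⟨by rw [Ideal.under_under, ← Ideal.over_def P p]⟩
  have hPq : P.LiesOver q := ⟨rfl⟩
  have hqmax : q.IsMaximal := Ideal.IsMaximal.of_liesOver_isMaximal q p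
  have hqbot : q ≠ ⊥ := Ideal.ne_bot_of_liesOver_of_ne_bot hp q
  have : Finite (𝓞 F ⧸ q) := Ideal.finiteQuotientOfFreeOfNeBot q hqbot
  have : Finite q.ResidueField :=
    Finite.of_surjective _ (Ideal.bijective_algebraMap_quotient_residueField q).2
  have : Nonempty (q.primesOver (𝓞 L)) := ⟨⟨P, ‹_›, hPq⟩⟩
  let H : Subgroup (L ≃ₐ[k] L) := fixingSubgroup (L ≃ₐ[k] L) (F : Set L)
  have hG : IsGaloisGroup H F L := inferInstance
  have hG' : IsGaloisGroup H (𝓞 F) (𝓞 L) := IsGaloisGroup.of_isFractionRing H (𝓞 F) (𝓞 L) F L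
  have e1 : q.ramificationIdxIn (𝓞 L) = Nat.card (P.inertia H) :=
    (Ideal.card_inertia_eq_ramificationIdxIn (G := H) q P).symm
  have e2 : q.ramificationIdxIn (𝓞 L) * q.inertiaDegIn (𝓞 L) =
    Nat.card (MulAction.stabilizer H P) :=
    (Ideal.card_stabilizer_eq (G := H) q P).symm
  have t1 := Ideal.ramificationIdxIn_mul_ramificationIdxIn (p := p) q (F ≃ₐ[k] F) (𝓞 L)
    (L ≃ₐ[k] L) H
  have t2 := Ideal.inertiaDegIn_mul_inertiaDegIn p q (F ≃ₐ[k] F) (𝓞 L)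
    (L ≃ₐ[k] L) H
  have c1 : Nat.card ↥(P.inertia (L ≃ₐ[k] L) ⊓ H : Subgroup (L ≃ₐ[k] L)) =
      Nat.card (P.inertia H) := by
    rw [Ideal.inertia, ← AddSubgroup.inertia_map_subtype]
    exact Nat.card_congr (Subgroup.equivMapOfInjective _ _ H.subtype_injective).toEquiv.symm
  have c2 : Nat.card ↥(MulAction.stabilizer (L ≃ₐ[k] L) P ⊓ H : Subgroup (L ≃ₐ[k] L)) =
      Nat.card (MulAction.stabilizer H P) := by
    rw [← Subgroup.subgroupOf_map_subtype]
    exact Nat.card_congr (Subgroup.equivMapOfInjective _ _ H.subtype_injective).toEquiv.symm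
  refine ⟨?_, ?_⟩
  · rw [← t1, e1, ← c1]; rfl
  · rw [← t1, ← t2, mul_mul_mul_comm, e2, ← c2]; rfl

open scoped Pointwise in
/-- If `Gal(L / k)` has exponent two, residue degrees are at most two: a Frobenius element `σ` at
`P` satisfies `σ * σ = 1`, so every `y` in the residue field satisfies `y ^ (q ^ 2) = y`, where `q` is
the order of the residue field of `p`. -/
lemma inertiaDegIn_le_two {k L : Type*} [Field k] [Field L] [NumberField k]
    [NumberField L] [Algebra k L] [IsGalois k L] (hG : ∀ σ : L ≃ₐ[k] L, σ * σ = 1)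
    (p : Ideal (𝓞 k)) (hp : p ≠ ⊥) [p.IsMaximal] (P : Ideal (𝓞 L)) [P.IsPrime] [P.LiesOver p] :
    p.inertiaDegIn (𝓞 L) ≤ 2 := by
  have hPmax : P.IsMaximal := Ideal.IsMaximal.of_liesOver_isMaximal P p
  have hPbot : P ≠ ⊥ := Ideal.ne_bot_of_liesOver_of_ne_bot hp P
  have : Finite (𝓞 L ⧸ P) := Ideal.finiteQuotientOfFreeOfNeBot P hPbot
  have : Finite (𝓞 k ⧸ p) := Ideal.finiteQuotientOfFreeOfNeBot p hp
  obtain ⟨σ, hσ⟩ := IsArithFrobAt.exists_of_isInvariant (𝓞 k) (L ≃ₐ[k] L) P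
  set q := Nat.card (𝓞 k ⧸ p) with hq
  have hq1 : 1 < q := Finite.one_lt_card
  have h1 : ∀ x : 𝓞 L, Ideal.Quotient.mk P (σ • x) = Ideal.Quotient.mk P x ^ q := by
    intro x
    have := hσ.mk_apply x
    rw [← Ideal.over_def P p] at this
    exact this
  have h2 : ∀ y : 𝓞 L ⧸ P, y ^ (q ^ 2) = y := by
    intro y
    obtain ⟨x, rfl⟩ := Ideal.Quotient.mk_surjective y
    rw [sq, pow_mul, ← h1, ← h1, ← mul_smul, hG, one_smul]
  let := Ideal.Quotient.field P
  have := Fintype.ofFinite (𝓞 L ⧸ P)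
  have h3 : Nat.card (𝓞 L ⧸ P) ≤ q ^ 2 := by
    classical
    have hne : (Polynomial.X ^ (q ^ 2) - Polynomial.X : Polynomial (𝓞 L ⧸ P)) ≠ 0 :=
      FiniteField.X_pow_card_sub_X_ne_zero _ (Nat.one_lt_pow two_ne_zero hq1)
    have hroot : ∀ y : 𝓞 L ⧸ P, y ∈ (Polynomial.X ^ (q ^ 2) - Polynomial.X :
        Polynomial (𝓞 L ⧸ P)).roots.toFinset := by
      intro y
      rw [Multiset.mem_toFinset, Polynomial.mem_roots hne]
      simp [h2 y]
    calc Nat.card (𝓞 L ⧸ P) = Finset.card Finset.univ := by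
          rw [Nat.card_eq_fintype_card, Finset.card_univ]
      _ ≤ _ := Finset.card_le_card fun y _ => hroot y
      _ ≤ _ := Multiset.toFinset_card_le _
      _ ≤ _ := Polynomial.card_roots' _
      _ = q ^ 2 := FiniteField.X_pow_card_sub_X_natDegree_eq _ (Nat.one_lt_pow two_ne_zero hq1)
  have h4 : Nat.card (𝓞 L ⧸ P) = q ^ p.inertiaDegIn (𝓞 L) := by
    have := Ideal.absNorm_eq_pow_inertiaDeg'_of_liesOver P p inferInstance hp
    rw [Ideal.inertiaDeg'_eq_inertiaDeg, ← Ideal.inertiaDegIn_eq_inertiaDeg p P (L ≃ₐ[k] L)] at this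
    simpa [Ideal.absNorm_apply, Submodule.cardQuot_apply] using this
  rw [h4] at h3
  exact (Nat.pow_le_pow_iff_right hq1).1 h3

lemma card_inf_eq {G : Type*} [Group G] (X H : Subgroup G) (h2 : Nat.card H = 2) (s : G)
    (hs : s ∈ H) (hs1 : s ≠ 1) [Decidable (s ∈ X)] :
    Nat.card ↥(X ⊓ H) = 1 + if s ∈ X then 1 else 0 := by
  have hH : ∀ g ∈ H, g = 1 ∨ g = s := by
    intro g hg
    by_contra! hcon
    have := (Nat.card_eq_two_iff' (⟨1, one_mem H⟩ : H)).1 h2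
    exact hcon.2 (congrArg Subtype.val (this.unique (y₁ := ⟨g, hg⟩) (y₂ := ⟨s, hs⟩)
      (fun h => hcon.1 (congrArg Subtype.val h)) (fun h => hs1 (congrArg Subtype.val h))))
  split_ifs with h
  · have : X ⊓ H = H := by
      refine inf_eq_right.2 fun g hg => ?_
      rcases hH g hg with rfl | rfl
      exacts [one_mem X, h]
    rw [this, h2]
  · have : X ⊓ H = ⊥ := by
      refine (Subgroup.eq_bot_iff_forall _).2 fun g hg => ?_
      rcases hH g hg.2 with rfl | rfl
      exacts [rfl, absurd hg.1 h]
    rw [this, Subgroup.card_bot]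

/-- In a group of order four with non-identity elements `σ i`, the order of a subgroup is one more than
the number of `σ i` it contains. -/
lemma card_eq_one_add_sum {G : Type*} [Group G] (hG : Nat.card G = 4) (σ : Fin 3 → G)
    (hσ : Function.Injective σ) (hσ1 : ∀ i, σ i ≠ 1) (X : Subgroup G) [DecidablePred (· ∈ X)] :
    Nat.card X = 1 + ∑ i, if σ i ∈ X then 1 else 0 := by
  have : Finite G := Nat.finite_of_card_ne_zero (by rw [hG]; decide)
  have := Fintype.ofFinite G
  have hb : Function.Bijective (fun o : Option (Fin 3) => o.elim 1 σ) := by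
    rw [Fintype.bijective_iff_injective_and_card]
    refine ⟨?_, by rw [← Nat.card_eq_fintype_card (α := G), hG]; rfl⟩
    rintro (_ | i) (_ | j) h
    · rfl
    · exact absurd h.symm (hσ1 j)
    · exact absurd h (hσ1 i)
    · exact congrArg some (hσ h)
  have h1 : Nat.card X = ∑ g : G, if g ∈ X then 1 else 0 := by
    rw [Nat.card_eq_fintype_card, Fintype.card_subtype, Finset.card_filter]
  rw [h1, ← (Equiv.ofBijective _ hb).sum_comp, Fintype.sum_option]
  simp

/-- The identity between local Euler factors, given the numerical constraints on the splitting types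
`(e, f, g)` in `L` and `(e' i, f' i, g' i)` in the quadratic fields. Here `ε i` and `δ i` indicate
whether the `i`-th involution lies in the inertia and in the decomposition group. -/
lemma local_identity_aux {e f g : ℕ} {ε δ e' f' g' : Fin 3 → ℕ} (t : ℝ) (hf : f ≤ 2)
    (h4 : g * (e * f) = 4) (h2 : ∀ i, g' i * (e' i * f' i) = 2)
    (hε : ∀ i, ε i = 0 ∨ ε i = 1) (hδ : ∀ i, δ i = 0 ∨ δ i = 1)
    (he : e = 1 + ∑ i, ε i) (hef : e * f = 1 + ∑ i, δ i)
    (he' : ∀ i, e' i * (1 + ε i) = e) (hef' : ∀ i, e' i * f' i * (1 + δ i) = e * f) :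
    (1 - t ^ f) ^ g * ((1 - t) * (1 - t)) = ∏ i, (1 - t ^ f' i) ^ g' i := by
  have key : ∀ i, f' i * (e * (1 + δ i)) = e * f * (1 + ε i) := by
    intro i
    rw [← hef' i]; nth_rewrite 1 [← he' i]; ring
  have key2 : ∀ i, g' i * (e * f) = 2 * (1 + δ i) := by
    intro i
    rw [← hef' i, ← h2 i]; ring
  have hf0 : 0 < f := by rcases Nat.eq_zero_or_pos f with h | h <;> simp_all
  have he0 : 0 < e := by lia
  have he4 : e ≤ 4 := by
    have h1 : ∀ i, ε i ≤ 1 := fun i => by rcases hε i with h | h <;> lia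
    have := h1 0; have := h1 1; have := h1 2
    rw [he, Fin.sum_univ_three]; lia
  have ka := key 0; have kb := key 1; have kc := key 2
  have la := key2 0; have lb := key2 1; have lc := key2 2
  rw [Fin.prod_univ_three]
  rw [Fin.sum_univ_three] at he hef
  clear key key2 h2 he' hef'
  have a0 := hε 0; have a1 := hε 1; have a2 := hε 2
  have b0 := hδ 0; have b1 := hδ 1; have b2 := hδ 2
  clear hε hδ
  generalize ε 0 = ε0 at *; generalize ε 1 = ε1 at *; generalize ε 2 = ε2 at *
  generalize δ 0 = δ0 at *; generalize δ 1 = δ1 at *; generalize δ 2 = δ2 at *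
  generalize f' 0 = f0 at *; generalize f' 1 = f1 at *; generalize f' 2 = f2 at *
  generalize g' 0 = g0 at *; generalize g' 1 = g1 at *; generalize g' 2 = g2 at *
  subst he
  -- The subgroups in question are given by `ε` and `δ`; each choice determines all splitting types.
  rcases a0 with rfl | rfl <;> rcases a1 with rfl | rfl <;> rcases a2 with rfl | rfl <;>
  rcases b0 with rfl | rfl <;> rcases b1 with rfl | rfl <;> rcases b2 with rfl | rfl <;>
  simp only [Nat.add_zero, Nat.zero_add, Nat.reduceAdd, Nat.mul_one, Nat.one_mul] at * <;>
  interval_cases f <;> first | lia | skip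
  all_goals
    have : f0 = 1 ∨ f0 = 2 := by lia
    have : f1 = 1 ∨ f1 = 2 := by lia
    have : f2 = 1 ∨ f2 = 2 := by lia
    have : g0 = 1 ∨ g0 = 2 := by lia
    have : g1 = 1 ∨ g1 = 2 := by lia
    have : g2 = 1 ∨ g2 = 2 := by lia
    have : g = 1 ∨ g = 2 ∨ g = 4 := by lia
    rcases ‹f0 = 1 ∨ f0 = 2› with rfl | rfl <;> first | lia | skip
    all_goals rcases ‹f1 = 1 ∨ f1 = 2› with rfl | rfl <;> first | lia | skip
    all_goals rcases ‹f2 = 1 ∨ f2 = 2› with rfl | rfl <;> first | lia | skip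
    all_goals rcases ‹g0 = 1 ∨ g0 = 2› with rfl | rfl <;> first | lia | skip
    all_goals rcases ‹g1 = 1 ∨ g1 = 2› with rfl | rfl <;> first | lia | skip
    all_goals rcases ‹g2 = 1 ∨ g2 = 2› with rfl | rfl <;> first | lia | skip
    all_goals rcases ‹g = 1 ∨ g = 2 ∨ g = 4› with rfl | rfl | rfl <;> first | lia | ring

open scoped Pointwise in
/-- The Euler factors at a prime `p` of `k`, with `t` in the role of `N(p) ^ (-s)`. -/
lemma local_identity {k L : Type*} [Field k] [Field L] [NumberField k]
    [NumberField L] [Algebra k L] [IsGalois k L] (hdeg : finrank k L = 4)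
    (hG : ∀ σ : L ≃ₐ[k] L, σ * σ = 1) (F : Fin 3 → IntermediateField k L)
    [∀ i, IsGalois k (F i)] (hF : ∀ i, finrank (F i) L = 2) (σ : Fin 3 → (L ≃ₐ[k] L))
    (hσ : Function.Injective σ) (hσ1 : ∀ i, σ i ≠ 1) (hσF : ∀ i, σ i ∈ (F i).fixingSubgroup)
    (p : Ideal (𝓞 k)) (hp : p ≠ ⊥) [p.IsMaximal] (t : ℝ) :
    (1 - t ^ p.inertiaDegIn (𝓞 L)) ^ (p.primesOver (𝓞 L)).ncard * ((1 - t) * (1 - t)) =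
      ∏ i, (1 - t ^ p.inertiaDegIn (𝓞 (F i))) ^ (p.primesOver (𝓞 (F i))).ncard := by
  classical
  obtain ⟨P, hP, hPp⟩ := (inferInstance : Nonempty (p.primesOver (𝓞 L)))
  have hcard : Nat.card (L ≃ₐ[k] L) = 4 := by rw [IsGalois.card_aut_eq_finrank, hdeg]
  have : Finite (𝓞 k ⧸ p) := Ideal.finiteQuotientOfFreeOfNeBot p hp
  have : Finite p.ResidueField :=
    Finite.of_surjective _ (Ideal.bijective_algebraMap_quotient_residueField p).2
  have hHcard (i : Fin 3) : Nat.card (F i).fixingSubgroup = 2 := by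
    rw [IsGalois.card_fixingSubgroup_eq_finrank, hF]
  have hI (i : Fin 3) := card_inf_eq (P.inertia (L ≃ₐ[k] L)) _ (hHcard i) (σ i) (hσF i) (hσ1 i)
  have hS (i : Fin 3) := card_inf_eq (MulAction.stabilizer (L ≃ₐ[k] L) P) _ (hHcard i) (σ i)
    (hσF i) (hσ1 i)
  have hram (i : Fin 3) := ramificationIdxIn_mul_card_inf (F i) p hp P
  refine local_identity_aux (e := p.ramificationIdxIn (𝓞 L))
    (e' := fun i => p.ramificationIdxIn (𝓞 (F i)))
    (ε := fun i => if σ i ∈ P.inertia (L ≃ₐ[k] L) then 1 else 0)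
    (δ := fun i => if σ i ∈ MulAction.stabilizer (L ≃ₐ[k] L) P then 1 else 0)
    t (inertiaDegIn_le_two hG p hp P) ?_ (fun i => ?_) (fun i => by split_ifs <;> simp)
    (fun i => by split_ifs <;> simp) ?_ ?_ (fun i => ?_) (fun i => ?_)
  · rw [Ideal.ncard_primesOver_mul_ramificationIdxIn_mul_inertiaDegIn p (𝓞 L) (L ≃ₐ[k] L), hcard]
  · rw [Ideal.ncard_primesOver_mul_ramificationIdxIn_mul_inertiaDegIn p (𝓞 (F i))
      (F i ≃ₐ[k] F i), IsGalois.card_aut_eq_finrank]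
    have := Module.finrank_mul_finrank k (F i) L
    rw [hF, hdeg] at this
    lia
  · rw [← card_eq_one_add_sum hcard σ hσ hσ1]
    exact (Ideal.card_inertia_eq_ramificationIdxIn p P).symm
  · rw [← card_eq_one_add_sum hcard σ hσ hσ1]
    exact (Ideal.card_stabilizer_eq p P).symm
  · rw [← hI]; exact (hram i).1
  · rw [← hS]; exact (hram i).2

/-! ### Comparison of zeta functions and of their residues -/

open IsDedekindDomain in
/-- The nonvanishing hypotheses guarantee absolute convergence of the Dirichlet series at `s`. -/
theorem dedekindZeta_mul_sq_eq {k L : Type*} [Field k] [Field L] [NumberField k]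
    [NumberField L] [Algebra k L] [IsGalois k L] (hdeg : finrank k L = 4)
    (hG : ∀ σ : L ≃ₐ[k] L, σ * σ = 1) (F : Fin 3 → IntermediateField k L)
    [∀ i, IsGalois k (F i)] (hF : ∀ i, finrank (F i) L = 2) (σ : Fin 3 → (L ≃ₐ[k] L))
    (hσ : Function.Injective σ) (hσ1 : ∀ i, σ i ≠ 1) (hσF : ∀ i, σ i ∈ (F i).fixingSubgroup)
    (s : ℝ) (hs : s ≠ 0) (hL : dedekindZeta L s ≠ 0) (hk : dedekindZeta k s ≠ 0)
    (hFs : ∀ i, dedekindZeta (F i) s ≠ 0) :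
    dedekindZeta L s * dedekindZeta k s ^ 2 = ∏ i, dedekindZeta (F i) s := by
  have e1 := hasProd_one_sub_of_summable (normPow k s hs)
    (fun I => by rw [normPow_apply]; positivity) (dedekindZeta_eq_tsum_normPow k s hs hk).1
  have e2 := (hasProd_one_sub_pow k s hs hL).mul (e1.mul e1)
  have e3 := hasProd_prod (s := Finset.univ) fun (i : Fin 3) _ => hasProd_one_sub_pow k s hs (hFs i)
  rw [funext fun b : HeightOneSpectrum (𝓞 k) =>
    have := b.isMaximal
    local_identity hdeg hG F hF σ hσ hσ1 hσF b.asIdeal b.ne_bot (normPow k s hs b.asIdeal)] at e2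
  have e4 := e2.unique e3
  rw [(dedekindZeta_eq_tsum_normPow L s hs hL).2, (dedekindZeta_eq_tsum_normPow k s hs hk).2,
    Finset.prod_congr rfl fun i _ => (dedekindZeta_eq_tsum_normPow (F i) s hs (hFs i)).2]
  rw [Finset.prod_inv_distrib, ← mul_inv, ← mul_inv, inv_inj] at e4
  rw [sq]
  exact_mod_cast e4

open Filter Topology in
lemma eventually_dedekindZeta_ne_zero (K : Type*) [Field K] [NumberField K] :
    ∀ᶠ s : ℝ in 𝓝[>] 1, dedekindZeta K s ≠ 0 := by
  have h := (tendsto_sub_one_mul_dedekindZeta_nhdsGT K).eventually_ne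
    (Complex.ofReal_ne_zero.2 (dedekindZeta_residue_pos K).ne')
  filter_upwards [h] with s hs h0
  simp [h0] at hs

open Filter Topology in
theorem residue_mul_sq_eq {k L : Type*} [Field k] [Field L] [NumberField k]
    [NumberField L] [Algebra k L] [IsGalois k L] (hdeg : finrank k L = 4)
    (hG : ∀ σ : L ≃ₐ[k] L, σ * σ = 1) (F : Fin 3 → IntermediateField k L)
    [∀ i, IsGalois k (F i)] (hF : ∀ i, finrank (F i) L = 2) (σ : Fin 3 → (L ≃ₐ[k] L))
    (hσ : Function.Injective σ) (hσ1 : ∀ i, σ i ≠ 1) (hσF : ∀ i, σ i ∈ (F i).fixingSubgroup) :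
    dedekindZeta_residue L * dedekindZeta_residue k ^ 2 = ∏ i, dedekindZeta_residue (F i) := by
  have hL := (tendsto_sub_one_mul_dedekindZeta_nhdsGT L).mul
    ((tendsto_sub_one_mul_dedekindZeta_nhdsGT k).pow 2)
  have hFi := tendsto_finsetProd (Finset.univ : Finset (Fin 3)) fun i _ =>
    tendsto_sub_one_mul_dedekindZeta_nhdsGT (F i)
  have hfin := tendsto_nhds_unique (hL.congr' ?_) hFi
  · exact_mod_cast hfin
  · filter_upwards [eventually_dedekindZeta_ne_zero L, eventually_dedekindZeta_ne_zero k,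
      eventually_all.2 fun i => eventually_dedekindZeta_ne_zero (F i),
      self_mem_nhdsWithin] with s h1 h2 h3 h4
    have hs : s ≠ 0 := by
      have : (1 : ℝ) < s := h4
      linarith
    rw [Finset.prod_mul_distrib, Finset.prod_const, Finset.card_univ, Fintype.card_fin,
      ← dedekindZeta_mul_sq_eq hdeg hG F hF σ hσ hσ1 hσF s hs h1 h2 h3]
    ring

/-- The residue of the Dedekind zeta function is `𝔠_K / √|d_K|`. -/
lemma frakC_eq (K : Type*) [Field K] [NumberField K] :
    frakC K = dedekindZeta_residue K * √((discr K).natAbs : ℝ) := by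
  have : √|(discr K : ℝ)| ≠ 0 := by
    rw [Real.sqrt_ne_zero (abs_nonneg _), abs_ne_zero]
    exact_mod_cast discr_ne_zero K
  have h2 : ((discr K).natAbs : ℝ) = |(discr K : ℝ)| := by
    rw [Nat.cast_natAbs, Int.cast_abs]
  rw [frakC, dedekindZeta_residue_def, h2]
  field_simp

lemma frakC_pos (K : Type*) [Field K] [NumberField K] : 0 < frakC K := by
  rw [frakC_eq]
  have := dedekindZeta_residue_pos K
  have : 0 < (discr K).natAbs := Int.natAbs_pos.2 (discr_ne_zero K)
  positivity

/-- **Brauer relation for biquadratic extensions** (Proposition 6.1 of the paper):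
for a biquadratic extension `L/k` of number fields with quadratic intermediate fields
`k₁, k₂, k₃`, one has `𝔠_L = 𝔠_k⁻² · 𝔠_{k₁} · 𝔠_{k₂} · 𝔠_{k₃}`. -/
theorem biquadratic_frakC {k L : Type*} [Field k] [Field L] [NumberField k]
    [NumberField L] [Algebra k L] [IsGalois k L] (hdeg : finrank k L = 4)
    (hgal : Nonempty ((L ≃ₐ[k] L) ≃* (Multiplicative (ZMod 2) × Multiplicative (ZMod 2))))
    (k₁ k₂ k₃ : IntermediateField k L)
    [NumberField k₁] [NumberField k₂] [NumberField k₃]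
    (h1 : finrank k k₁ = 2) (h2 : finrank k k₂ = 2) (h3 : finrank k k₃ = 2)
    (h12 : k₁ ≠ k₂) (h13 : k₁ ≠ k₃) (h23 : k₂ ≠ k₃) :
    frakC L = (frakC k)⁻¹ ^ 2 * frakC k₁ * frakC k₂ * frakC k₃ := by
  have hG : ∀ σ : L ≃ₐ[k] L, σ * σ = 1 := by
    obtain ⟨e⟩ := hgal
    intro σ
    have : ∀ x : Multiplicative (ZMod 2) × Multiplicative (ZMod 2), x * x = 1 := by decide
    exact e.injective (by rw [map_mul, map_one, this])
  let F : Fin 3 → IntermediateField k L := ![k₁, k₂, k₃]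
  have hFk : ∀ i, finrank k (F i) = 2 := by
    intro i; fin_cases i
    exacts [h1, h2, h3]
  have hFinj : Function.Injective F := by
    intro i j hij
    fin_cases i <;> fin_cases j <;> first | rfl | exact absurd hij ‹_› | exact absurd hij.symm ‹_›
  have hF : ∀ i, finrank (F i) L = 2 := by
    intro i
    have := Module.finrank_mul_finrank k (F i) L
    rw [hFk, hdeg] at this
    lia
  have hgalF : ∀ i, IsGalois k (F i) := fun i =>
    have : Algebra.IsQuadraticExtension k (F i) := ⟨hFk i⟩
    inferInstance
  have hcard (i : Fin 3) : Nat.card (F i).fixingSubgroup = 2 := by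
    rw [IsGalois.card_fixingSubgroup_eq_finrank, hF]
  have hex (i : Fin 3) : ∃ σ ∈ (F i).fixingSubgroup, σ ≠ 1 := by
    have : Nontrivial (F i).fixingSubgroup :=
      Finite.one_lt_card_iff_nontrivial.1 (by rw [hcard]; decide)
    exact (Subgroup.nontrivial_iff_exists_ne_one _).1 this
  choose σ hσF hσ1 using hex
  have hz (i : Fin 3) : (F i).fixingSubgroup = Subgroup.zpowers (σ i) := by
    refine (Subgroup.eq_of_le_of_card_ge (Subgroup.zpowers_le.2 (hσF i)) ?_).symm
    rw [hcard, Nat.card_zpowers, orderOf_eq_prime (p := 2) (by rw [sq, hG]) (hσ1 i)]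
  have hσ : Function.Injective σ := by
    intro i j hij
    apply hFinj
    rw [← IsGalois.fixedField_fixingSubgroup (F i), ← IsGalois.fixedField_fixingSubgroup (F j),
      hz, hz, hij]
  have hres := residue_mul_sq_eq hdeg hG F hF σ hσ hσ1 hσF
  have hdisc := natAbs_discr_eq hdeg F hF σ hσ hσ1 hσF
  have hprod : frakC L * frakC k ^ 2 = ∏ i, frakC (F i) := by
    simp only [frakC_eq]
    rw [Finset.prod_mul_distrib, ← hres, ← Real.sqrt_prod _ (fun _ _ => Nat.cast_nonneg _),
      ← Nat.cast_prod, ← hdisc, Nat.cast_mul, Real.sqrt_mul (Nat.cast_nonneg _), Nat.cast_pow,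
      Real.sqrt_sq (Nat.cast_nonneg _), mul_pow, Real.sq_sqrt (Nat.cast_nonneg _)]
    ring
  rw [Fin.prod_univ_three] at hprod
  have hk := (frakC_pos k).ne'
  have : frakC L * frakC k ^ 2 = frakC k₁ * frakC k₂ * frakC k₃ := hprod
  field_simp
  linarith
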